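/- Achievability of the lower bound: for every pair of natural numbers p, q with 1 ≤ p ≤ q, there exist nonempty finite sets W1, W2 (e.g., with |W1| = q, |W2| = p, and |W1 ∩ W2| = p) whose cosine similarity equals S = √(p/q) and whose resemblance equals R = S² = p/q. -/

import Mathlib

/-!
For nested sets `t ⊆ s` the intersection is `t` and the union is `s`, so the resemblance is
`|t| / |s|`, while the cosine similarity `|t| / √(|s| |t|)` collapses to its square root.
-/

section NestedSets

open Finset

variable {α : Type*} [DecidableEq α] {s t : Finset α}

/-- The cosine similarity `S` of the 0-1 indicator vectors of two finite sets, with the junk value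
`0` when one of them is empty. -/
noncomputable def cosineSimilarity (s t : Finset α) : ℝ :=
  #(s ∩ t) / √(#s * #t)

/-- The resemblance (Jaccard similarity) `R` of two finite sets, with the junk value `0` when both
are empty. -/
noncomputable def resemblance (s t : Finset α) : ℝ :=
  #(s ∩ t) / #(s ∪ t)

theorem cosineSimilarity_of_subset (h : t ⊆ s) : cosineSimilarity s t = √(#t / #s) :=
  calc cosineSimilarity s t
      = #t / √(#s * #t) := by rw [cosineSimilarity, inter_eq_right.2 h]
    _ = #t / √(#t) / √(#s) := by rw [Real.sqrt_mul (Nat.cast_nonneg _), div_mul_eq_div_div_swap]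
    _ = √(#t / #s) := by rw [Real.div_sqrt, Real.sqrt_div (Nat.cast_nonneg _)]

theorem resemblance_of_subset (h : t ⊆ s) : resemblance s t = #t / #s := by
  rw [resemblance, inter_eq_right.2 h, union_eq_left.2 h]

theorem resemblance_eq_cosineSimilarity_sq_of_subset (h : t ⊆ s) :
    resemblance s t = cosineSimilarity s t ^ 2 := by
  rw [resemblance_of_subset h, cosineSimilarity_of_subset h, Real.sq_sqrt (by positivity)]

end NestedSets

/-- Achievability of the lower bound: for naturals `1 ≤ p ≤ q`, there exist nonempty finite
sets `W1, W2` with `|W1| = q`, `|W2| = p`, `|W1 ∩ W2| = p`, cosine similarity `S = √(p/q)`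
and resemblance `R = S² = p/q`. -/
theorem lower_bound_achievable (p q : ℕ) (hp : 1 ≤ p) (hpq : p ≤ q) :
    ∃ W1 W2 : Finset ℕ, W1.Nonempty ∧ W2.Nonempty ∧
      W1.card = q ∧ W2.card = p ∧ (W1 ∩ W2).card = p ∧
      ((W1 ∩ W2).card : ℝ) / Real.sqrt ((W1.card : ℝ) * (W2.card : ℝ)) =
        Real.sqrt ((p : ℝ) / (q : ℝ)) ∧
      ((W1 ∩ W2).card : ℝ) / ((W1 ∪ W2).card : ℝ) =
        (((W1 ∩ W2).card : ℝ) / Real.sqrt ((W1.card : ℝ) * (W2.card : ℝ))) ^ 2 ∧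
      ((W1 ∩ W2).card : ℝ) / ((W1 ∪ W2).card : ℝ) = (p : ℝ) / (q : ℝ) := by
  have hsub : Finset.range p ⊆ Finset.range q := Finset.range_subset_range.2 hpq
  refine ⟨Finset.range q, Finset.range p, Finset.nonempty_range_iff.2 (by lia),
    Finset.nonempty_range_iff.2 (by lia), Finset.card_range q, Finset.card_range p, ?_, ?_,
    resemblance_eq_cosineSimilarity_sq_of_subset hsub, ?_⟩
  · rw [Finset.inter_eq_right.2 hsub, Finset.card_range]
  · simpa only [cosineSimilarity, Finset.card_range] using cosineSimilarity_of_subset hsub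
  · simpa only [resemblance, Finset.card_range] using resemblance_of_subset hsub
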